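/- Let R be a commutative ring, A an associative R-algebra, and q ∈ R a unit. Let e, F, u, g, C ∈ A satisfy e*F − F*e = −q⁻¹·g*C, e*u = u*e, C*u = q⁻¹·u*C, and g*u = u*g. Then e commutes with [F, u]_{q⁻¹}, i.e. e*[F, u]_{q⁻¹} = [F, u]_{q⁻¹}*e. -/

import Mathlib

/-- The `a`-commutator `[x, y]_a = x*y - a • (y*x)` in an `R`-algebra. -/
def qComm {R : Type*} [CommRing R] {A : Type*} [Ring A] [Algebra R A]
    (a : R) (x y : A) : A := x * y - a • (y * x)

/-!
The bracket `⁅e, ·⁆` acts as a derivation on `[F, u]_a`. Since `e` commutes with `u`, only the term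
`[⁅e, F⁆, u]_a` survives; as `⁅e, F⁆` is a multiple of `g * C` and `g` commutes with `u`, it is a
multiple of `g * [C, u]_a`, which vanishes.
-/

section

variable {R : Type*} [CommRing R] {A : Type*} [Ring A] [Algebra R A]

theorem qComm_eq_zero_iff {a : R} {x y : A} : qComm a x y = 0 ↔ x * y = a • (y * x) :=
  sub_eq_zero

theorem qComm_zero_right (a : R) (x : A) : qComm a x 0 = 0 := by
  simp [qComm]

theorem qComm_smul_left (a c : R) (x y : A) : qComm a (c • x) y = c • qComm a x y := by
  simp only [qComm, smul_mul_assoc, mul_smul_comm, smul_sub, smul_comm a c]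

theorem qComm_mul_left (a : R) (x y z : A) :
    qComm a (x * y) z = x * qComm a y z + a • (⁅x, z⁆ * y) := by
  simp only [qComm, Ring.lie_def, mul_sub, sub_mul, mul_smul_comm, smul_sub, mul_assoc]
  abel

theorem lie_qComm (a : R) (e x y : A) :
    ⁅e, qComm a x y⁆ = qComm a ⁅e, x⁆ y + qComm a x ⁅e, y⁆ := by
  simp only [qComm, Ring.lie_def, mul_sub, sub_mul, mul_smul_comm, smul_mul_assoc, smul_sub,
    mul_assoc]
  abel

theorem e_comm_Fu_general (a c : R) {e F u g C : A} (heF : e * F - F * e = c • (g * C))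
    (heu : Commute e u) (hCu : C * u = a • (u * C)) (hgu : Commute g u) :
    Commute e (qComm a F u) := by
  have h_lie : qComm a ⁅e, F⁆ u = 0 := by
    calc qComm a ⁅e, F⁆ u = c • qComm a (g * C) u := by rw [Ring.lie_def, heF, qComm_smul_left]
      _ = c • (g * qComm a C u) := by
        rw [qComm_mul_left, hgu.lie_eq, zero_mul, smul_zero, add_zero]
      _ = 0 := by rw [qComm_eq_zero_iff.mpr hCu, mul_zero, smul_zero]
  rw [commute_iff_lie_eq, lie_qComm, h_lie, heu.lie_eq, qComm_zero_right, add_zero]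

end

/-- Abstract form of `[e_γ, f_{μ+γ+ν}] = 0`: if `e*F - F*e = -q⁻¹•(g*C)`, `e` commutes
with `u`, `C*u = q⁻¹•(u*C)` and `g` commutes with `u`, then `e` commutes with `[F,u]_{q⁻¹}`. -/
theorem e_comm_Fu {R : Type*} [CommRing R] {A : Type*} [Ring A] [Algebra R A]
    (q : Rˣ) (e F u g C : A)
    (heF : e * F - F * e = -(((q⁻¹ : Rˣ) : R)) • (g * C))
    (heu : e * u = u * e)
    (hCu : C * u = ((q⁻¹ : Rˣ) : R) • (u * C))
    (hgu : g * u = u * g) :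
    e * qComm ((q⁻¹ : Rˣ) : R) F u = qComm ((q⁻¹ : Rˣ) : R) F u * e :=
  e_comm_Fu_general _ _ heF heu hCu hgu
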